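/- arXiv:1906.03851 — 2 statements merged into one kernel-verified Lean document; each statement's English description precedes it below -/
import Mathlib

section
/- (Proposition 4.1.) Let F be the logistic function, θ ∈ ℝ, δ_1,…,δ_k ∈ ℝ. Let μ̃ be the product probability measure on {0,1}^k under which the coordinates are independent Bernoulli variables with μ̃(Ỹ^{(r)} = 1) = F(θ − δ_r) for r = 1,…,k. The Guttman space Ω^G has positive μ̃-probability, and if μ denotes μ̃ conditioned on Ω^G, then the coordinate sum Y = Y^{(1)} + … + Y^{(k)} under μ follows the partial credit model with parameters θ, δ_1,…,δ_k, i.e., μ(Y = r) = exp(∑_{l=1}^r (θ − δ_l)) / ∑_{s=0}^k exp(∑_{l=1}^s (θ − δ_l)) for all r = 0,…,k. -/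
open scoped Classical

/-- The logistic function `F(x) = exp x / (1 + exp x)`. -/
noncomputable def logistic (x : ℝ) : ℝ := Real.exp x / (1 + Real.exp x)

/-- A vector in `{0,1}^k` is a Guttman vector if its coordinates are nonincreasing,
i.e. it has the form `(1,…,1,0,…,0)`. -/
def IsGuttman {k : ℕ} (y : Fin k → Bool) : Prop :=
  ∀ i j : Fin k, i ≤ j → y j = true → y i = true

/-- The sum `Y = Y⁽¹⁾ + … + Y⁽ᵏ⁾` of the binary coordinates. -/
def gsum {k : ℕ} (y : Fin k → Bool) : ℕ :=
  ∑ i : Fin k, if y i then 1 else 0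

/-- The product (independent Bernoulli) probability mass function on `{0,1}^k`
with success probabilities `F(θ - δ r)`, `r = 1,…,k` (coordinate `i` is `r = i+1`). -/
noncomputable def prodBer (k : ℕ) (θ : ℝ) (δ : ℕ → ℝ) (y : Fin k → Bool) : ℝ :=
  ∏ i : Fin k,
    if y i then logistic (θ - δ ((i : ℕ) + 1)) else 1 - logistic (θ - δ ((i : ℕ) + 1))

/-- The probability mass function of the partial credit model (PCM). -/
noncomputable def pcmPMF (k : ℕ) (θ : ℝ) (δ : ℕ → ℝ) (r : ℕ) : ℝ :=
  Real.exp (∑ l ∈ Finset.Icc 1 r, (θ - δ l)) /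
    ∑ s ∈ Finset.range (k + 1), Real.exp (∑ l ∈ Finset.Icc 1 s, (θ - δ l))

/-- The Guttman vector with `r` leading ones. -/
def gvec (k r : ℕ) : Fin k → Bool := fun i => decide ((i : ℕ) < r)

theorem gvec_isGuttman (k r : ℕ) : IsGuttman (gvec k r) := by
  intro i j hij h
  simp only [gvec, decide_eq_true_eq] at h ⊢
  have : (i : ℕ) ≤ j := hij
  omega

theorem gsum_gvec (k r : ℕ) (hr : r ≤ k) : gsum (gvec k r) = r := by
  simp only [gsum, gvec, decide_eq_true_eq]
  rw [Fin.sum_univ_eq_sum_range (fun i => if i < r then 1 else 0) k, ← Finset.sum_filter]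
  have : (Finset.range k).filter (fun i => i < r) = Finset.range r := by
    ext i; simp; omega
  rw [this]; simp

theorem gsum_eq_card {k : ℕ} (y : Fin k → Bool) :
    gsum y = (Finset.univ.filter (fun i => y i = true)).card := by
  simp [gsum]

theorem gsum_le {k : ℕ} (y : Fin k → Bool) : gsum y ≤ k := by
  rw [gsum_eq_card]
  simpa using Finset.card_le_univ (Finset.univ.filter (fun i => y i = true))

theorem eq_gvec {k : ℕ} (y : Fin k → Bool) (hy : IsGuttman y) : y = gvec k (gsum y) := by
  funext i
  rw [Bool.eq_iff_iff, gsum_eq_card]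
  simp only [gvec, decide_eq_true_eq]
  constructor
  · intro h
    have hs : Finset.Iic i ⊆ Finset.univ.filter (fun i => y i = true) := by
      intro j hj
      simp only [Finset.mem_filter, Finset.mem_univ, true_and]
      exact hy j i (Finset.mem_Iic.1 hj) h
    have := Finset.card_le_card hs
    rw [Fin.card_Iic] at this
    omega
  · intro h
    by_contra hn
    have hs : Finset.univ.filter (fun i => y i = true) ⊆ Finset.Iio i := by
      intro j hj
      simp only [Finset.mem_filter, Finset.mem_univ, true_and] at hj
      rw [Finset.mem_Iio]
      by_contra hji
      exact hn (hy i j (not_lt.1 hji) hj)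
    have := Finset.card_le_card hs
    rw [Fin.card_Iio] at this
    omega

theorem prodBer_gvec (k r : ℕ) (hr : r ≤ k) (θ : ℝ) (δ : ℕ → ℝ) :
    prodBer k θ δ (gvec k r) =
      (∏ i : Fin k, (1 + Real.exp (θ - δ ((i : ℕ) + 1)))⁻¹) *
        Real.exp (∑ l ∈ Finset.Icc 1 r, (θ - δ l)) := by
  have h1 : Real.exp (∑ l ∈ Finset.Icc 1 r, (θ - δ l)) =
      ∏ i : Fin k, if (i : ℕ) < r then Real.exp (θ - δ ((i : ℕ) + 1)) else 1 := by
    rw [Fin.prod_univ_eq_prod_range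
      (fun i => if i < r then Real.exp (θ - δ (i + 1)) else 1) k, ← Finset.prod_filter]
    have : (Finset.range k).filter (fun i => i < r) = Finset.range r := by
      ext i; simp; omega
    rw [this, ← Real.exp_sum, Finset.range_eq_Ico,
      Finset.sum_Ico_add' (fun l => θ - δ l) 0 r 1]
    rfl
  rw [h1, ← Finset.prod_mul_distrib]
  unfold prodBer
  refine Finset.prod_congr rfl fun i _ => ?_
  have hp : (1 + Real.exp (θ - δ ((i : ℕ) + 1))) ≠ 0 := by positivity
  simp only [gvec, decide_eq_true_eq, logistic]
  split_ifs
  · field_simp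
  · field_simp
    ring

theorem sum_guttman (k : ℕ) (f : (Fin k → Bool) → ℝ) :
    ∑ y ∈ Finset.univ.filter (fun y : Fin k → Bool => IsGuttman y), f y =
      ∑ s ∈ Finset.range (k + 1), f (gvec k s) := by
  refine Finset.sum_bij' (fun y _ => gsum y) (fun s _ => gvec k s) ?_ ?_ ?_ ?_ ?_
  · intro y _
    exact Finset.mem_range.2 (Nat.lt_succ_of_le (gsum_le y))
  · intro s _
    simpa using gvec_isGuttman k s
  · intro y hy
    exact (eq_gvec y (Finset.mem_filter.1 hy).2).symm
  · intro s hs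
    exact gsum_gvec k s (Nat.le_of_lt_succ (Finset.mem_range.1 hs))
  · intro y hy
    rw [← eq_gvec y (Finset.mem_filter.1 hy).2]

/-- Proposition 4.1: the Guttman space has positive probability under
the product of independent Bernoullis with success probabilities `F(θ - δ r)`, and
after conditioning on the Guttman space the coordinate sum `Y` follows the partial
credit model with parameters `θ, δ 1, …, δ k`. -/
theorem pcm_from_independent_bernoullis_conditioned_on_guttman
    (k : ℕ) (θ : ℝ) (δ : ℕ → ℝ) :
    0 < (∑ y ∈ Finset.univ.filter (fun y : Fin k → Bool => IsGuttman y),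
          prodBer k θ δ y) ∧
    ∀ r ≤ k,
      (∑ y ∈ Finset.univ.filter (fun y : Fin k → Bool => IsGuttman y ∧ gsum y = r),
          prodBer k θ δ y) /
        (∑ y ∈ Finset.univ.filter (fun y : Fin k → Bool => IsGuttman y),
          prodBer k θ δ y)
        = pcmPMF k θ δ r := by
  have hC : 0 < ∏ i : Fin k, (1 + Real.exp (θ - δ ((i : ℕ) + 1)))⁻¹ :=
    Finset.prod_pos fun i _ => by positivity
  have hS : 0 < ∑ s ∈ Finset.range (k + 1), Real.exp (∑ l ∈ Finset.Icc 1 s, (θ - δ l)) :=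
    Finset.sum_pos (fun s _ => Real.exp_pos _) ⟨0, by simp⟩
  have hT : (∑ y ∈ Finset.univ.filter (fun y : Fin k → Bool => IsGuttman y),
      prodBer k θ δ y) = (∏ i : Fin k, (1 + Real.exp (θ - δ ((i : ℕ) + 1)))⁻¹) *
        ∑ s ∈ Finset.range (k + 1), Real.exp (∑ l ∈ Finset.Icc 1 s, (θ - δ l)) := by
    rw [sum_guttman, Finset.mul_sum]
    exact Finset.sum_congr rfl fun s hs =>
      prodBer_gvec k s (Nat.le_of_lt_succ (Finset.mem_range.1 hs)) θ δ
  refine ⟨hT ▸ mul_pos hC hS, fun r hr => ?_⟩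
  have hF : Finset.univ.filter (fun y : Fin k → Bool => IsGuttman y ∧ gsum y = r) =
      {gvec k r} := by
    ext y
    simp only [Finset.mem_filter, Finset.mem_univ, true_and, Finset.mem_singleton]
    constructor
    · rintro ⟨h1, h2⟩
      rw [← h2]
      exact eq_gvec y h1
    · rintro rfl
      exact ⟨gvec_isGuttman k r, gsum_gvec k r hr⟩
  rw [hT, hF, Finset.sum_singleton, prodBer_gvec k r hr, pcmPMF,
    mul_div_mul_left _ _ hC.ne']
end

section
/- (Proposition 4.6.) Let F be the logistic function, θ ∈ ℝ, δ_1,…,δ_k ∈ ℝ, and set π̃_r = F(θ − δ_r) for r = 1,…,k. If p is the probability mass function of the partial credit model with parameters θ, δ_1,…,δ_k, then for every r = 0,…,k, p(r) = (∏_{j=1}^r π̃_j · ∏_{j=r+1}^k (1 − π̃_j)) / s̃, where s̃ = ∑_{s=0}^k ∏_{j=1}^s π̃_j ∏_{j=s+1}^k (1 − π̃_j) and empty products equal 1. -/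
open scoped Classical

theorem logistic_eq_exp_mul (x : ℝ) : logistic x = Real.exp x * (1 - logistic x) := by
  have h : (1 + Real.exp x) ≠ 0 := by positivity
  unfold logistic
  field_simp
  ring

theorem one_sub_logistic_pos (x : ℝ) : 0 < 1 - logistic x := by
  have h : (1 + Real.exp x) ≠ 0 := by positivity
  have : 1 - logistic x = 1 / (1 + Real.exp x) := by
    unfold logistic
    field_simp
    ring
  rw [this]
  positivity

theorem pcm_prod_eq (k : ℕ) (θ : ℝ) (δ : ℕ → ℝ) (r : ℕ) (hr : r ≤ k) :
    (∏ j ∈ Finset.Icc 1 r, logistic (θ - δ j)) *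
      ∏ j ∈ Finset.Icc (r + 1) k, (1 - logistic (θ - δ j)) =
    Real.exp (∑ l ∈ Finset.Icc 1 r, (θ - δ l)) *
      ∏ j ∈ Finset.Icc 1 k, (1 - logistic (θ - δ j)) := by
  have h1 : ∏ j ∈ Finset.Icc 1 r, logistic (θ - δ j) =
      Real.exp (∑ l ∈ Finset.Icc 1 r, (θ - δ l)) *
        ∏ j ∈ Finset.Icc 1 r, (1 - logistic (θ - δ j)) := by
    rw [Real.exp_sum, ← Finset.prod_mul_distrib]
    exact Finset.prod_congr rfl fun j _ => logistic_eq_exp_mul _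
  have h2 : Finset.Icc 1 k = Finset.Icc 1 r ∪ Finset.Icc (r + 1) k := by
    ext j
    simp only [Finset.mem_union, Finset.mem_Icc]
    omega
  have h3 : Disjoint (Finset.Icc 1 r) (Finset.Icc (r + 1) k) := by
    rw [Finset.disjoint_left]
    intro j
    simp only [Finset.mem_Icc]
    omega
  rw [h1, h2, Finset.prod_union h3, mul_assoc]

/-- Proposition 4.6: with `π̃ r = F(θ - δ r)`, the PCM probabilities
can be written as `p r = (∏_{j=1}^r π̃ j · ∏_{j=r+1}^k (1 - π̃ j)) / s̃`, where
`s̃ = ∑_{s=0}^k ∏_{j=1}^s π̃ j ∏_{j=s+1}^k (1 - π̃ j)`. -/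
theorem pcm_product_representation
    (k : ℕ) (θ : ℝ) (δ : ℕ → ℝ) (p : ℕ → ℝ)
    (hpcm : ∀ r ≤ k, p r = pcmPMF k θ δ r) :
    ∀ r ≤ k,
      p r = ((∏ j ∈ Finset.Icc 1 r, logistic (θ - δ j)) *
              ∏ j ∈ Finset.Icc (r + 1) k, (1 - logistic (θ - δ j))) /
            ∑ s ∈ Finset.range (k + 1),
              (∏ j ∈ Finset.Icc 1 s, logistic (θ - δ j)) *
                ∏ j ∈ Finset.Icc (s + 1) k, (1 - logistic (θ - δ j)) := by
  intro r hr
  have hC : ∏ j ∈ Finset.Icc 1 k, (1 - logistic (θ - δ j)) ≠ 0 :=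
    (Finset.prod_pos fun j _ => one_sub_logistic_pos _).ne'
  have hs : ∑ s ∈ Finset.range (k + 1),
        (∏ j ∈ Finset.Icc 1 s, logistic (θ - δ j)) *
          ∏ j ∈ Finset.Icc (s + 1) k, (1 - logistic (θ - δ j)) =
      (∑ s ∈ Finset.range (k + 1), Real.exp (∑ l ∈ Finset.Icc 1 s, (θ - δ l))) *
        ∏ j ∈ Finset.Icc 1 k, (1 - logistic (θ - δ j)) := by
    rw [Finset.sum_mul]
    exact Finset.sum_congr rfl fun s hs =>
      pcm_prod_eq k θ δ s (Nat.lt_succ_iff.mp (Finset.mem_range.mp hs))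
  rw [hpcm r hr, hs, pcm_prod_eq k θ δ r hr, mul_div_mul_right _ _ hC, pcmPMF]
end
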